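/- Let k be a field of characteristic 0 and B an affine k-domain graded over k by a finitely generated abelian group G. Then: (a) 𝒳(B) = ⋃_{H ∈ ℳ(B)} 𝕋_H(B); (b) if B is normal, then every element H of ℳ(B) satisfies 𝔾̄(B) ⊆ H. -/

import Mathlib

noncomputable section

/-- A derivation is locally nilpotent. -/
def IsLND {R : Type*} [CommRing R] (D : Derivation ℤ R R) : Prop :=
  ∀ b : R, ∃ n : ℕ, 0 < n ∧ (⇑D)^[n] b = 0

/-- Kernel of a derivation, as a subring. -/
def kerDer {R : Type*} [CommRing R] (D : Derivation ℤ R R) : Subring R where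
  carrier := {x | D x = 0}
  one_mem' := by simp
  mul_mem' := by
    intro a b ha hb
    simp only [Set.mem_setOf_eq] at *
    rw [Derivation.leibniz, ha, hb]
    simp
  add_mem' := by
    intro a b ha hb
    simp only [Set.mem_setOf_eq] at *
    rw [map_add, ha, hb, add_zero]
  zero_mem' := by simp
  neg_mem' := by
    intro a ha
    simp only [Set.mem_setOf_eq] at *
    rw [map_neg, ha, neg_zero]

section Graded

variable {G : Type*} [AddCommGroup G] {B : Type*} [CommRing B]

/-- The Veronese subring `B^{(H)} = ⊕_{i ∈ H} B_i` of a `G`-graded ring,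
realized as the subring generated by the homogeneous elements whose degree lies in `H`. -/
def verSub (𝒜 : G → AddSubgroup B) (H : AddSubgroup G) : Subring B :=
  Subring.closure (⋃ i ∈ (H : Set G), (𝒜 i : Set B))

/-- 𝔾(B): the subgroup of G generated by the degrees of nonzero homogeneous elements. -/
def Gsub (𝒜 : G → AddSubgroup B) : AddSubgroup G :=
  AddSubgroup.closure { i : G | 𝒜 i ≠ ⊥ }

/-- `H ∈ 𝕋(B)`: the quotient `𝔾(B)/(H ∩ 𝔾(B))` is torsion. -/
def Tmem (𝒜 : G → AddSubgroup B) (H : AddSubgroup G) : Prop :=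
  ∀ g ∈ Gsub 𝒜, ∃ n : ℕ, 0 < n ∧ n • g ∈ H

/-- A homogeneous derivation of `B`. -/
def IsHomogDer (𝒜 : G → AddSubgroup B) (D : Derivation ℤ B B) : Prop :=
  ∃ d : G, ∀ (i : G) (x : B), x ∈ 𝒜 i → D x ∈ 𝒜 (i + d)

/-- A homogeneous derivation of a graded subring `S` of `B`. -/
def IsHomogDerOn (𝒜 : G → AddSubgroup B) (S : Subring B) (D : Derivation ℤ S S) : Prop :=
  ∃ d : G, ∀ (i : G) (x : S), (x : B) ∈ 𝒜 i → ((D x : S) : B) ∈ 𝒜 (i + d)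

/-- 𝕄̄(B,p): the subgroup of G generated by the degrees i with B_i ⊄ p. -/
def Mbar (𝒜 : G → AddSubgroup B) (p : Ideal B) : AddSubgroup G :=
  AddSubgroup.closure { i : G | ¬ (𝒜 i : Set B) ⊆ (p : Set B) }

/-- A prime ideal of height 1. -/
def heightOne {R : Type*} [CommRing R] (p : Ideal R) : Prop :=
  p.IsPrime ∧ (∃ q : Ideal R, q.IsPrime ∧ q < p) ∧
    ∀ q r : Ideal R, q.IsPrime → r.IsPrime → q < r → r < p → False

open Classical in
/-- 𝔾̄(B). -/
def Gbar (𝒜 : G → AddSubgroup B) : AddSubgroup G :=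
  if ∃ p : Ideal B, heightOne p then ⨅ p : {p : Ideal B // heightOne p}, Mbar 𝒜 p.1
  else Gsub 𝒜

end Graded

/-- 𝒳(B): the set of H ∈ 𝕋(B) with HLND(B^{(H)}) ≠ {0}. -/
def Xset {G : Type*} [AddCommGroup G] {B : Type*} [CommRing B]
    (𝒜 : G → AddSubgroup B) : Set (AddSubgroup G) :=
  { H | Tmem 𝒜 H ∧ ∃ D : Derivation ℤ (verSub 𝒜 H) (verSub 𝒜 H),
      IsLND D ∧ IsHomogDerOn 𝒜 (verSub 𝒜 H) D ∧ D ≠ 0 }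

/-- ℳ(B): the set of maximal elements of the poset (𝒳(B), ⊆). -/
def Mset {G : Type*} [AddCommGroup G] {B : Type*} [CommRing B]
    (𝒜 : G → AddSubgroup B) : Set (AddSubgroup G) :=
  { H | H ∈ Xset 𝒜 ∧ ∀ H' ∈ Xset 𝒜, H ≤ H' → H' = H }

section General

open TensorProduct in
lemma aux_ext_der {A L : Type*} [CommRing A] [IsDomain A] [CharZero A] [Field L] [Algebra A L]
    [FaithfulSMul A L] [Algebra.IsAlgebraic A L] (D : Derivation ℤ A A) :
    ∃ E : Derivation ℤ L L, ∀ a, E (algebraMap A L a) = algebraMap A L (D a) := by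
  let : Algebra (FractionRing A) L := FractionRing.liftAlgebra A L
  have : IsScalarTower A (FractionRing A) L := FractionRing.isScalarTower_liftAlgebra A L
  have : CharZero (FractionRing A) :=
    charZero_of_injective_algebraMap (IsFractionRing.injective A (FractionRing A))
  have : Algebra.IsAlgebraic (FractionRing A) L :=
    (IsFractionRing.comap_isAlgebraic_iff (A := A) (K := FractionRing A) (C := L)).mp inferInstance
  have : Algebra.FormallyEtale (FractionRing A) L := Algebra.FormallyEtale.of_isSeparable _ _
  have : Algebra.FormallyEtale A (FractionRing A) :=
    Algebra.FormallyEtale.of_isLocalization (nonZeroDivisors A)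
  have : Algebra.FormallyEtale A L := Algebra.FormallyEtale.comp A (FractionRing A) L
  let f : Ω[A⁄ℤ] →ₗ[A] L := (Algebra.linearMap A L) ∘ₗ D.liftKaehlerDifferential
  let g : Ω[L⁄ℤ] →ₗ[L] L := (f.liftBaseChange L) ∘ₗ
    (KaehlerDifferential.tensorKaehlerEquivOfFormallyEtale ℤ A L).symm.toLinearMap
  refine ⟨g.compDer (KaehlerDifferential.D ℤ L), fun a => ?_⟩
  have h := KaehlerDifferential.tensorKaehlerEquivOfFormallyEtale_symm_D_algebraMap ℤ A L a
  simp [g, f, h]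

/-- `x` has degree `m` with respect to the derivation `D`. -/
def IsDeg {R : Type*} [CommRing R] (D : Derivation ℤ R R) (x : R) (m : ℕ) : Prop :=
  (⇑D)^[m] x ≠ 0 ∧ (⇑D)^[m+1] x = 0

variable {R : Type*} [CommRing R] (D : Derivation ℤ R R)

lemma iter_zero (n : ℕ) : (⇑D)^[n] 0 = 0 := by
  induction n with
  | zero => rfl
  | succ n ih => rw [Function.iterate_succ_apply, map_zero, ih]

lemma iter_add (n : ℕ) (x y : R) : (⇑D)^[n] (x + y) = (⇑D)^[n] x + (⇑D)^[n] y := by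
  induction n generalizing x y with
  | zero => rfl
  | succ n ih => simp only [Function.iterate_succ_apply, map_add, ih]

lemma iter_ge {m n : ℕ} (h : m ≤ n) {x : R} (hx : (⇑D)^[m] x = 0) : (⇑D)^[n] x = 0 := by
  obtain ⟨r, rfl⟩ := Nat.exists_eq_add_of_le h
  rw [add_comm, Function.iterate_add_apply, hx, iter_zero]

lemma iter_const_mul (n : ℕ) (c x : R) (hc : D c = 0) :
    (⇑D)^[n] (c * x) = c * (⇑D)^[n] x := by
  induction n generalizing x with
  | zero => rfl
  | succ n ih => simp only [Function.iterate_succ_apply, Derivation.leibniz, hc,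
      mul_zero, add_zero, smul_eq_mul, ih]

lemma iter_mul_top (N : ℕ) : ∀ (m n : ℕ), m + n = N → ∀ (x y : R), (⇑D)^[m+1] x = 0 →
    (⇑D)^[n+1] y = 0 →
    (⇑D)^[m+n] (x * y) = ((m+n).choose m : R) * ((⇑D)^[m] x * (⇑D)^[n] y) := by
  induction N with
  | zero =>
    intro m n h x y hx hy
    obtain ⟨rfl, rfl⟩ : m = 0 ∧ n = 0 := by omega
    simp
  | succ N ih =>
    intro m n h x y hx hy
    rcases m with _ | m
    · have hx' : D x = 0 := by simpa using hx
      simp [iter_const_mul D _ x y hx']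
    rcases n with _ | n
    · have hy' : D y = 0 := by simpa using hy
      rw [mul_comm x y, add_zero, iter_const_mul D _ y x hy']
      simp [mul_comm]
    have e1 : m + 1 + (n + 1) = (m + (n + 1)) + 1 := by ring
    have e2 : m + (n + 1) = (m + 1) + n := by ring
    rw [e1, Function.iterate_succ_apply, Derivation.leibniz, iter_add, smul_eq_mul, smul_eq_mul,
      mul_comm y]
    rw [ih m (n+1) (by omega) (D x) y hx hy]
    rw [e2, ih (m+1) n (by omega) x (D y) hx hy]
    rw [← Function.iterate_succ_apply, ← Function.iterate_succ_apply]
    rw [show m + 1 + n + 1 = (m + n + 1) + 1 by ring, Nat.choose_succ_succ,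
      show m + 1 + n = m + n + 1 by ring]
    push_cast
    simp only [Nat.succ_eq_add_one]
    ring

lemma IsDeg.unique {D : Derivation ℤ R R} {x : R} {m n : ℕ} (h : IsDeg D x m)
    (h' : IsDeg D x n) : m = n := by
  by_contra hne
  rcases Nat.lt_or_gt_of_ne hne with hl | hl
  · exact h'.1 (iter_ge D hl h.2)
  · exact h.1 (iter_ge D hl h'.2)

lemma IsDeg.exists {D : Derivation ℤ R R} (hD : IsLND D) {x : R} (hx : x ≠ 0) :
    ∃ m, IsDeg D x m := by
  classical
  have hex : ∃ n, (⇑D)^[n] x = 0 := by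
    obtain ⟨n, _, h⟩ := hD x
    exact ⟨n, h⟩
  have h1 := Nat.find_spec hex
  have h2 : Nat.find hex ≠ 0 := by
    intro h
    rw [h] at h1
    exact hx h1
  obtain ⟨m, hm⟩ := Nat.exists_eq_succ_of_ne_zero h2
  refine ⟨m, Nat.find_min hex (by omega), ?_⟩
  rw [hm] at h1
  exact h1

lemma IsDeg.mul [IsDomain R] [CharZero R] {D : Derivation ℤ R R} {x y : R} {m n : ℕ}
    (hx : IsDeg D x m) (hy : IsDeg D y n) : IsDeg D (x * y) (m + n) := by
  have h := iter_mul_top D _ m n rfl x y hx.2 hy.2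
  constructor
  · rw [h]
    refine mul_ne_zero ?_ (mul_ne_zero hx.1 hy.1)
    exact_mod_cast (Nat.choose_pos (Nat.le_add_right m n)).ne'
  · rw [Function.iterate_succ_apply', h]
    have h1 : D ((⇑D)^[m] x) = 0 := (Function.iterate_succ_apply' D m x).symm.trans hx.2
    have h2 : D ((⇑D)^[n] y) = 0 := (Function.iterate_succ_apply' D n y).symm.trans hy.2
    simp [h1, h2]

lemma IsDeg.pow [IsDomain R] [CharZero R] {D : Derivation ℤ R R} {x : R} {m : ℕ}
    (hx : IsDeg D x m) (n : ℕ) : IsDeg D (x ^ n) (n * m) := by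
  induction n with
  | zero => simp [IsDeg]
  | succ n ih =>
    rw [pow_succ, Nat.succ_mul]
    exact ih.mul hx

lemma IsDeg.const [Nontrivial R] {D : Derivation ℤ R R} {c : R} (h0 : c ≠ 0) (hc : D c = 0) :
    IsDeg D c 0 := ⟨h0, hc⟩

lemma IsDeg.der {D : Derivation ℤ R R} {x : R} {m : ℕ} (h : IsDeg D x m) (hx : D x ≠ 0) :
    ∃ r, m = r + 1 ∧ IsDeg D (D x) r := by
  rcases m with _ | r
  · exact absurd h.2 hx
  · exact ⟨r, rfl, h.1,
      h.2⟩

lemma lnd_unit [IsDomain R] [CharZero R] {D : Derivation ℤ R R} (hD : IsLND D) {u : R}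
    (hu : IsUnit u) : D u = 0 := by
  obtain ⟨v, hv⟩ := hu.exists_right_inv
  have hu0 : u ≠ 0 := hu.ne_zero
  have hv0 : v ≠ 0 := right_ne_zero_of_mul_eq_one hv
  obtain ⟨m, hm⟩ := IsDeg.exists hD hu0
  obtain ⟨n, hn⟩ := IsDeg.exists hD hv0
  have h1 : IsDeg D (1 : R) 0 := IsDeg.const one_ne_zero (by simp)
  have h2 := hm.mul hn
  rw [hv] at h2
  have := h2.unique h1
  obtain rfl : m = 0 := by omega
  exact hm.2

/-- Powers of a local slice. -/
lemma iter_slice {y a : R} (hy : D y = a) (ha : D a = 0) (m : ℕ) : ∀ e : R, D e = 0 →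
    (⇑D)^[m] (e * y ^ m) = (m.factorial : R) * (e * a ^ m) := by
  induction m with
  | zero => intro e _; simp
  | succ m ih =>
    intro e he
    have h1 : D (e * y ^ (m+1)) = ((m + 1 : ℕ) * e * a) * y ^ m := by
      rw [Derivation.leibniz, Derivation.leibniz_pow, he, hy]
      simp only [smul_eq_mul, nsmul_eq_mul, add_tsub_cancel_right, mul_zero]
      ring
    rw [Function.iterate_succ_apply, h1, ih _ (by simp [he, ha]), Nat.factorial_succ]
    push_cast
    ring

/-- Nilpotency of an element whose `n`-th powers of derivatives live in a subring. -/
lemma nilp_of_pow {A C : Type*} [CommRing A] [IsDomain A] [CharZero A] [CommRing C] [IsDomain C]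
    [CharZero C]
    (φ : A →+* C) (hφ : Function.Injective φ) (D : Derivation ℤ A A) (hD : IsLND D)
    (E : Derivation ℤ C C) (hE : ∀ a, E (φ a) = φ (D a)) (n : ℕ) (hn : 0 < n) (m : ℕ) :
    ∀ (c : C) (F : A), (∀ j, ∃ F, φ F = ((⇑E)^[j] c) ^ n) → φ F = c ^ n → IsDeg D F m →
      ∃ N, 0 < N ∧ (⇑E)^[N] c = 0 := by
  induction m using Nat.strong_induction_on with
  | _ m ih =>
    intro c F hF hFc hm
    by_cases hEc : E c = 0
    · exact ⟨1, one_pos, hEc⟩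
    have hF0 : F ≠ 0 := by
      rintro rfl
      exact hm.1 (iter_zero D m)
    have hc0 : c ≠ 0 := by
      rintro rfl
      simp at hEc
    obtain ⟨F', hF'⟩ := hF 1
    simp only [Function.iterate_one] at hF'
    have hF'0 : F' ≠ 0 := by
      rintro rfl
      rw [map_zero] at hF'
      exact (pow_ne_zero n hEc) hF'.symm
    have h1 : φ (D F) = n * (c ^ (n-1) * E c) := by
      rw [← hE, hFc, Derivation.leibniz_pow]
      simp
    have h2 : (D F) ^ n = ((n : A) ^ n) * (F ^ (n-1) * F') := by
      apply hφ
      rw [map_pow, h1]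
      simp only [map_mul, map_pow, map_natCast, hFc, hF']
      ring
    have hnA : (n : A) ≠ 0 := by exact_mod_cast hn.ne'
    have hDF : D F ≠ 0 := by
      intro h
      rw [h, zero_pow hn.ne'] at h2
      exact mul_ne_zero (pow_ne_zero n hnA) (mul_ne_zero (pow_ne_zero _ hF0) hF'0) h2.symm
    obtain ⟨r, rfl, hr⟩ := hm.der hDF
    obtain ⟨m', hm'⟩ := IsDeg.exists hD hF'0
    have h3 := (IsDeg.const (D := D) (pow_ne_zero n hnA) (by simp [Derivation.leibniz_pow])).mul
      ((hm.pow (n-1)).mul hm')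
    rw [← h2] at h3
    have h4 := h3.unique (hr.pow n)
    have h5 : m' < r + 1 := by
      obtain ⟨t, rfl⟩ : ∃ t, n = t + 1 := ⟨n - 1, by omega⟩
      simp only [add_tsub_cancel_right] at h4
      nlinarith
    obtain ⟨N, hN, h⟩ := ih m' h5 (E c) F' (fun j => by
      obtain ⟨F'', h⟩ := hF (j+1)
      exact ⟨F'', by rw [h, Function.iterate_succ_apply]⟩) hF' hm'
    exact ⟨N + 1, by omega, by rw [Function.iterate_succ_apply]; exact h⟩

/-- Height one from minimality over a nonzero principal ideal. -/
lemma heightOne_of_minimal {B : Type*} [CommRing B] [IsDomain B] [IsNoetherianRing B]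
    {p : B} (hp : p ≠ 0) {P : Ideal B} (hP : P ∈ (Ideal.span {p}).minimalPrimes) :
    heightOne P := by
  have hPp : P.IsPrime := hP.1.1
  have hpP : p ∈ P := hP.1.2 (Ideal.mem_span_singleton_self p)
  refine ⟨hPp, ⟨⊥, Ideal.isPrime_bot, bot_lt_iff_ne_bot.mpr ?_⟩, ?_⟩
  · rintro rfl
    exact hp hpP
  · intro q r hq hr hqr hrP
    have h1 := Ideal.height_le_one_of_isPrincipal_of_mem_minimalPrimes _ P hP
    have h2 : q.height + 1 ≤ r.height := by
      have := hq
      have := hr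
      exact Ideal.height_add_one_le_of_lt_of_isPrime hqr
    have h3 : r.height + 1 ≤ P.height := by
      have := hr
      exact Ideal.height_add_one_le_of_lt_of_isPrime hrP
    have h4 : (q.height + 1) + 1 ≤ (1 : ℕ∞) := (add_le_add_left h2 1).trans (h3.trans h1)
    have h5 : (1 : ℕ∞) + 1 ≤ 1 := le_trans (add_le_add_left (le_add_self) 1) h4
    exact absurd h5 (by decide)

/-- Algebraic Hartogs. -/
lemma hartogs {B : Type*} [CommRing B] [IsDomain B] [IsNoetherianRing B] [IsIntegrallyClosed B]
    {K : Type*} [Field K] [Algebra B K] [IsFractionRing B K] (z : K)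
    (h : ∀ P : Ideal B, heightOne P → ∃ f, f ∉ P ∧ ∃ b, algebraMap B K f * z = algebraMap B K b) :
    ∃ b, algebraMap B K b = z := by
  obtain ⟨b, a, ha, rfl⟩ := IsFractionRing.div_surjective (A := B) z
  have ha0 : a ≠ 0 := nonZeroDivisors.ne_zero ha
  have inj := IsFractionRing.injective B K
  have haK : algebraMap B K a ≠ 0 := by simpa using ha0
  by_contra hcon
  have hb : (Ideal.Quotient.mk (Ideal.span {a}) b) ≠ 0 := by
    intro hb
    rw [Ideal.Quotient.eq_zero_iff_mem, Ideal.mem_span_singleton] at hb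
    obtain ⟨t, rfl⟩ := hb
    exact hcon ⟨t, by rw [map_mul]; field_simp⟩
  obtain ⟨P, hP, hle⟩ := exists_le_isAssociatedPrime_of_isNoetherianRing B _ hb
  rw [isAssociatedPrime_iff] at hP
  obtain ⟨hPp, x, hx⟩ := hP
  obtain ⟨x, rfl⟩ := Ideal.Quotient.mk_surjective x
  have key : ∀ (u v : B), u ∈ (⊥ : Submodule B (B ⧸ Ideal.span {a})).colon
      {Ideal.Quotient.mk (Ideal.span {a}) v} ↔ ∃ t, u * v = a * t := by
    intro u v
    rw [Submodule.mem_colon_singleton, Submodule.mem_bot, ← Ideal.Quotient.mk_eq_mk,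
      ← Submodule.Quotient.mk_smul, Ideal.Quotient.mk_eq_mk, Ideal.Quotient.eq_zero_iff_mem,
      Ideal.mem_span_singleton]
    rfl
  have hxP : ∀ u, u ∈ P ↔ ∃ t, u * x = a * t := fun u => by rw [hx]; exact key u x
  have haP : a ∈ P := (hxP a).2 ⟨x, rfl⟩
  set w : K := algebraMap B K x / algebraMap B K a with hw
  have hwP : ∀ u ∈ P, ∃ t, algebraMap B K t = w * algebraMap B K u := by
    intro u hu
    obtain ⟨t, ht⟩ := (hxP u).1 hu
    refine ⟨t, ?_⟩
    have := congrArg (algebraMap B K) ht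
    simp only [map_mul] at this
    rw [hw]
    field_simp
    linear_combination -this
  -- there is `p ∈ P` with `w p ∉ P`
  have hex : ∃ p ∈ P, ∃ v, v ∉ P ∧ algebraMap B K v = w * algebraMap B K p := by
    by_contra hno
    push Not at hno
    have hintg : IsIntegral B w := by
      let N : Submodule B K := Submodule.map (Algebra.linearMap B K) P
      refine isIntegral_of_smul_mem_submodule N ?_ ?_ w ?_
      · intro hN
        have : algebraMap B K a ∈ N := ⟨a, haP, rfl⟩
        rw [hN] at this
        exact haK (by simpa using this)
      · exact Submodule.FG.map _ (IsNoetherian.noetherian P)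
      · rintro _ ⟨u, hu, rfl⟩
        obtain ⟨t, ht⟩ := hwP u hu
        refine ⟨t, ?_, ?_⟩
        · by_contra htP
          exact hno u hu t htP ht
        · simpa using ht
    obtain ⟨t, ht⟩ := IsIntegrallyClosed.isIntegral_iff.1 hintg
    apply hPp.ne_top
    rw [Ideal.eq_top_iff_one, hxP]
    refine ⟨t, inj ?_⟩
    rw [one_mul, map_mul, ht, hw]
    field_simp
  obtain ⟨p, hpP, v, hvP, hv⟩ := hex
  have hp0 : p ≠ 0 := by
    rintro rfl
    rw [map_zero, mul_zero, map_eq_zero_iff _ inj] at hv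
    exact hvP (hv ▸ P.zero_mem)
  have hmin : P ∈ (Ideal.span {p}).minimalPrimes := by
    refine ⟨⟨hPp, by rwa [Ideal.span_singleton_le_iff_mem]⟩, ?_⟩
    rintro Q ⟨hQ, hpQ⟩ hQP u hu
    obtain ⟨t, ht⟩ := hwP u hu
    have : v * u = t * p := by
      apply inj
      rw [map_mul, map_mul, hv, ht]
      ring
    have hvu : v * u ∈ Q := by
      rw [this]
      exact Q.mul_mem_left _ (hpQ (Ideal.mem_span_singleton_self p))
    rcases hQ.mem_or_mem hvu with h1 | h1
    · exact absurd (hQP h1) hvP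
    · exact h1
  obtain ⟨f, hfP, c, hc⟩ := h P (heightOne_of_minimal hp0 hmin)
  apply hfP
  apply hle
  rw [key]
  refine ⟨c, inj ?_⟩
  rw [map_mul, map_mul, ← hc]
  field_simp

end General

section GradedAux

variable {G : Type*} [AddCommGroup G] {B : Type*} [CommRing B]
  (𝒜 : G → AddSubgroup B)

lemma mem_verSub {H : AddSubgroup G} {i : G} (hi : i ∈ H) {x : B} (hx : x ∈ 𝒜 i) :
    x ∈ verSub 𝒜 H :=
  Subring.subset_closure (Set.mem_biUnion (show i ∈ (H : Set G) from hi) hx)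

lemma verSub_mono {H H' : AddSubgroup G} (h : H' ≤ H) : verSub 𝒜 H' ≤ verSub 𝒜 H :=
  Subring.closure_mono (Set.biUnion_subset_biUnion_left h)

lemma mem_Gsub {i : G} {x : B} (hx : x ∈ 𝒜 i) (h0 : x ≠ 0) : i ∈ Gsub 𝒜 := by
  apply AddSubgroup.subset_closure
  intro h
  have h' : 𝒜 i = ⊥ := h
  rw [h'] at hx
  exact h0 (by simpa using hx)

variable [DecidableEq G] [GradedRing 𝒜]

lemma verSub_induction {H : AddSubgroup G} {p : verSub 𝒜 H → Prop}
    (hom : ∀ i ∈ H, ∀ x : verSub 𝒜 H, (x : B) ∈ 𝒜 i → p x)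
    (add : ∀ x y, p x → p y → p (x + y)) (x : verSub 𝒜 H) : p x := by
  have key : ∀ z : B, z ∈ AddSubgroup.closure
      (Submonoid.closure (⋃ i ∈ (H : Set G), (𝒜 i : Set B)) : Set B) →
      ∃ h : z ∈ verSub 𝒜 H, p ⟨z, h⟩ := by
    have hmon : ∀ z ∈ Submonoid.closure (⋃ i ∈ (H : Set G), (𝒜 i : Set B)),
        ∃ i ∈ H, z ∈ 𝒜 i := by
      intro z hz
      induction hz using Submonoid.closure_induction with
      | mem z hz =>
        simp only [Set.mem_iUnion] at hz
        obtain ⟨i, hi, hz⟩ := hz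
        exact ⟨i, hi, hz⟩
      | one => exact ⟨0, H.zero_mem, SetLike.one_mem_graded 𝒜⟩
      | mul a b _ _ iha ihb =>
        obtain ⟨i, hi, ha⟩ := iha
        obtain ⟨j, hj, hb⟩ := ihb
        exact ⟨i + j, H.add_mem hi hj, SetLike.mul_mem_graded ha hb⟩
    intro z hz
    induction hz using AddSubgroup.closure_induction'' with
    | zero => exact ⟨Subring.zero_mem _, hom 0 H.zero_mem _ (AddSubgroup.zero_mem _)⟩
    | mem z hz =>
      obtain ⟨i, hi, hz⟩ := hmon z hz
      exact ⟨mem_verSub 𝒜 hi hz, hom i hi _ hz⟩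
    | neg_mem z hz =>
      obtain ⟨i, hi, hz⟩ := hmon z hz
      have hz' : -z ∈ 𝒜 i := neg_mem hz
      exact ⟨mem_verSub 𝒜 hi hz', hom i hi _ hz'⟩
    | add a b _ _ iha ihb =>
      obtain ⟨ha, ha'⟩ := iha
      obtain ⟨hb, hb'⟩ := ihb
      exact ⟨Subring.add_mem _ ha hb, add _ _ ha' hb'⟩
  obtain ⟨z, hz⟩ := x
  exact (key z (Subring.mem_closure_iff.1 hz)).2

lemma verSub_decompose {H : AddSubgroup G} (x : verSub 𝒜 H) :
    ∀ i, i ∉ H → (DirectSum.decompose 𝒜 (x : B) i : B) = 0 := by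
  refine verSub_induction 𝒜 (H := H)
    (p := fun x => ∀ i, i ∉ H → (DirectSum.decompose 𝒜 (x : B) i : B) = 0) ?_ ?_ x
  · intro j hj x hx i hi
    refine DirectSum.decompose_of_mem_ne 𝒜 hx ?_
    rintro rfl
    exact hi hj
  · intro x y hx hy i hi
    simp [DirectSum.decompose_add, hx i hi, hy i hi]

lemma deg_mem_of_mem_verSub {H : AddSubgroup G} {i : G} {x : B} (hx : x ∈ verSub 𝒜 H)
    (h0 : x ≠ 0) (hi : x ∈ 𝒜 i) : i ∈ H := by
  by_contra h
  have h1 := verSub_decompose 𝒜 (⟨x, hx⟩ : verSub 𝒜 H) i h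
  simp only [DirectSum.decompose_of_mem_same 𝒜 hi] at h1
  exact h0 h1

lemma mem_of_mul_mem [IsDomain B] {i j : G} {z q : B} (hz : z ∈ 𝒜 i) (h0 : z ≠ 0)
    (h : z * q ∈ 𝒜 j) : q ∈ 𝒜 (j - i) := by
  classical
  rw [← DirectSum.sum_support_decompose 𝒜 q]
  refine sum_mem fun l hl => ?_
  by_cases hlj : l = j - i
  · rw [← hlj]
    exact SetLike.coe_mem _
  · exfalso
    have h1 := DirectSum.coe_decompose_mul_add_of_left_mem 𝒜 (j := l) (b := q) hz
    rw [DirectSum.decompose_of_mem_ne 𝒜 h (by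
      intro h2
      exact hlj (by rw [h2]; abel))] at h1
    have h2 := (mul_eq_zero.1 h1.symm).resolve_left h0
    rw [DFinsupp.mem_support_toFun] at hl
    exact hl (Subtype.ext h2)

lemma zero_nsmul_add_mem {H : AddSubgroup G} (S : Submonoid B) {i : G} {u : B} (hu : u ∈ S)
    (hi : u ∈ 𝒜 i) (t : ℕ) (ht : 0 < t) (htH : t • i ∈ H) :
    ∃ v ∈ S, ∃ j, v ∈ 𝒜 j ∧ -i - j ∈ H := by
  refine ⟨u ^ (t - 1), S.pow_mem hu _, (t - 1) • i, SetLike.pow_mem_graded _ hi, ?_⟩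
  obtain ⟨s, rfl⟩ : ∃ s, t = s + 1 := ⟨t - 1, by omega⟩
  have : -i - (s + 1 - 1) • i = -((s + 1) • i) := by
    simp only [add_tsub_cancel_right, succ_nsmul]
    abel
  rw [this]
  exact H.neg_mem htH

/-- The subgroup of degrees, modulo `H`, of homogeneous elements of `S`. -/
def degSub (H : AddSubgroup G) (hT : Tmem 𝒜 H) (S : Submonoid B) (hS : (0 : B) ∉ S) :
    AddSubgroup G where
  carrier := {g | ∃ u ∈ S, ∃ j, u ∈ 𝒜 j ∧ g - j ∈ H}
  zero_mem' := ⟨1, S.one_mem, 0, SetLike.one_mem_graded 𝒜, by simp⟩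
  add_mem' := by
    rintro g g' ⟨u, hu, j, hj, hg⟩ ⟨u', hu', j', hj', hg'⟩
    refine ⟨u * u', S.mul_mem hu hu', j + j', SetLike.mul_mem_graded hj hj', ?_⟩
    rw [add_sub_add_comm]
    exact H.add_mem hg hg'
  neg_mem' := by
    rintro g ⟨u, hu, j, hj, hg⟩
    have hu0 : u ≠ 0 := fun h => hS (h ▸ hu)
    obtain ⟨t, ht, htH⟩ := hT j (mem_Gsub 𝒜 hj hu0)
    obtain ⟨v, hv, l, hl, hlH⟩ := zero_nsmul_add_mem 𝒜 S hu hj t ht htH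
    refine ⟨v, hv, l, hl, ?_⟩
    have : -g - l = (-j - l) - (g - j) := by abel
    rw [this]
    exact H.sub_mem hlH hg

lemma mem_degSub {H : AddSubgroup G} {hT : Tmem 𝒜 H} {S : Submonoid B} {hS : (0 : B) ∉ S} {g : G} :
    g ∈ degSub 𝒜 H hT S hS ↔ ∃ u ∈ S, ∃ j, u ∈ 𝒜 j ∧ g - j ∈ H := Iff.rfl

lemma le_degSub {H : AddSubgroup G} {hT : Tmem 𝒜 H} {S : Submonoid B} {hS : (0 : B) ∉ S} :
    H ≤ degSub 𝒜 H hT S hS := fun g hg =>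
  ⟨1, S.one_mem, 0, SetLike.one_mem_graded 𝒜, by simpa using hg⟩

lemma deg_mem_degSub {H : AddSubgroup G} {hT : Tmem 𝒜 H} {S : Submonoid B} {hS : (0 : B) ∉ S}
    {u : B} (hu : u ∈ S) {j : G} (hj : u ∈ 𝒜 j) : j ∈ degSub 𝒜 H hT S hS :=
  ⟨u, hu, j, hj, by simp [H.zero_mem]⟩

lemma exists_pow_mem {H : AddSubgroup G} (hT : Tmem 𝒜 H) {i : G} {x : B} (hx : x ∈ 𝒜 i)
    (h0 : x ≠ 0) : ∃ t : ℕ, 0 < t ∧ t • i ∈ H ∧ x ^ t ∈ verSub 𝒜 H := by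
  obtain ⟨t, ht, h⟩ := hT i (mem_Gsub 𝒜 hx h0)
  exact ⟨t, ht, h, mem_verSub 𝒜 h (SetLike.pow_mem_graded _ hx)⟩

lemma verSub_integral {H : AddSubgroup G} (hT : Tmem 𝒜 H) :
    Algebra.IsIntegral (verSub 𝒜 H) B := by
  constructor
  intro x
  classical
  rw [← DirectSum.sum_support_decompose 𝒜 x]
  refine IsIntegral.sum _ fun i _ => ?_
  by_cases h0 : (DirectSum.decompose 𝒜 x i : B) = 0
  · rw [h0]
    exact isIntegral_zero
  · obtain ⟨t, ht, -, h⟩ := exists_pow_mem 𝒜 hT (SetLike.coe_mem (DirectSum.decompose 𝒜 x i)) h0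
    refine IsIntegral.of_pow ht ?_
    exact isIntegral_algebraMap (R := verSub 𝒜 H) (x := ⟨_, h⟩)

lemma iter_homog {H : AddSubgroup G} (D : Derivation ℤ (verSub 𝒜 H) (verSub 𝒜 H)) (d : G)
    (hd : ∀ (i : G) (x : verSub 𝒜 H), (x : B) ∈ 𝒜 i → ((D x : verSub 𝒜 H) : B) ∈ 𝒜 (i + d))
    (m : ℕ) : ∀ (i : G) (x : verSub 𝒜 H), (x : B) ∈ 𝒜 i →
      (((⇑D)^[m] x : verSub 𝒜 H) : B) ∈ 𝒜 (i + m • d) := by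
  induction m with
  | zero => intro i x hx; simpa using hx
  | succ m ih =>
    intro i x hx
    have := ih _ _ (hd i x hx)
    rw [add_assoc, ← succ_nsmul'] at this
    exact this

lemma exists_homog_ne {H : AddSubgroup G} {D : Derivation ℤ (verSub 𝒜 H) (verSub 𝒜 H)}
    (hD : D ≠ 0) : ∃ i ∈ H, ∃ x : verSub 𝒜 H, (x : B) ∈ 𝒜 i ∧ D x ≠ 0 := by
  by_contra hno
  push Not at hno
  apply hD
  ext x
  congr 1
  refine verSub_induction 𝒜 (p := fun x => D x = 0) hno ?_ x
  intro x y hx hy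
  rw [map_add, hx, hy, add_zero]

variable {k : Type*} [Field k] [Algebra k B]

/-- The structure map of the Veronese subring. -/
def kToVer (hoverk : ∀ c : k, algebraMap k B c ∈ 𝒜 0) (H : AddSubgroup G) : k →+* verSub 𝒜 H :=
  (algebraMap k B).codRestrict (verSub 𝒜 H) fun c => mem_verSub 𝒜 H.zero_mem (hoverk c)

lemma verSub_fg [Algebra.FiniteType k B] (hoverk : ∀ c : k, algebraMap k B c ∈ 𝒜 0)
    {H : AddSubgroup G} (hT : Tmem 𝒜 H) :
    ∃ s : Finset (verSub 𝒜 H), ∀ T : Subring (verSub 𝒜 H),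
      (∀ c : k, kToVer 𝒜 hoverk H c ∈ T) → (∀ x ∈ s, x ∈ T) → ∀ x, x ∈ T := by
  let _ : Algebra k (verSub 𝒜 H) := (kToVer 𝒜 hoverk H).toAlgebra
  have : IsScalarTower k (verSub 𝒜 H) B := IsScalarTower.of_algebraMap_eq fun c => rfl
  have hintg : Algebra.IsIntegral (verSub 𝒜 H) B := verSub_integral 𝒜 hT
  have hft : Algebra.FiniteType (verSub 𝒜 H) B :=
    Algebra.FiniteType.of_restrictScalars_finiteType k (verSub 𝒜 H) B
  have hfin : Module.Finite (verSub 𝒜 H) B := Algebra.IsIntegral.finite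
  obtain ⟨s, hs⟩ := fg_of_fg_of_fg k (verSub 𝒜 H) B Algebra.FiniteType.out hfin.1
    Subtype.coe_injective
  refine ⟨s, fun T hk hsT x => ?_⟩
  let T' : Subalgebra k (verSub 𝒜 H) := { T with algebraMap_mem' := hk }
  have h1 : Algebra.adjoin k (s : Set (verSub 𝒜 H)) ≤ T' := Algebra.adjoin_le hsT
  rw [hs] at h1
  exact h1 (Algebra.mem_top (x := x))

end GradedAux

/-- Dividing a derivation. -/
lemma exists_div_der {A' A : Type*} [CommRing A'] [CommRing A] [IsDomain A] [CharZero A]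
    (ι : A' →+* A) (hι : Function.Injective ι) (D : Derivation ℤ A A) (hD : IsLND D)
    (w z : A) (hz : z ≠ 0) (hw : w ≠ 0) (hDw : D w = 0) (q : A' → A')
    (hq : ∀ x, w * D (ι x) = z * ι (q x)) :
    ∃ D' : Derivation ℤ A' A', IsLND D' ∧ ∀ x, D' x = q x := by
  have hadd : ∀ x y, q (x + y) = q x + q y := by
    intro x y
    apply hι
    apply mul_left_cancel₀ hz
    rw [← hq, map_add, map_add, map_add, mul_add, mul_add, hq, hq]
  have hmul : ∀ x y, q (x * y) = x * q y + y * q x := by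
    intro x y
    apply hι
    apply mul_left_cancel₀ hz
    rw [← hq]
    have h1 := hq x
    have h2 := hq y
    simp only [map_mul, map_add, Derivation.leibniz, smul_eq_mul]
    linear_combination (ι x) * h2 + (ι y) * h1
  let D' : Derivation ℤ A' A' :=
    Derivation.mk' (AddMonoidHom.mk' q hadd).toIntLinearMap (fun x y => by simpa using hmul x y)
  have hD' : ∀ x, D' x = q x := fun x => rfl
  refine ⟨D', ?_, hD'⟩
  have key : ∀ m, ∀ x, IsDeg D (ι x) m → ∃ N, 0 < N ∧ (⇑D')^[N] x = 0 := by
    intro m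
    induction m using Nat.strong_induction_on with
    | _ m ih =>
      intro x hx
      by_cases h0 : q x = 0
      · exact ⟨1, one_pos, h0⟩
      have h1 : ι (q x) ≠ 0 := (map_ne_zero_iff ι hι).2 h0
      have h2 : D (ι x) ≠ 0 := by
        intro h
        have := hq x
        rw [h, mul_zero] at this
        exact mul_ne_zero hz h1 this.symm
      obtain ⟨r, rfl, hr⟩ := hx.der h2
      obtain ⟨p, hp⟩ := IsDeg.exists hD h1
      obtain ⟨e, he⟩ := IsDeg.exists hD hz
      have h3 := (IsDeg.const hw hDw).mul hr
      rw [hq] at h3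
      have h4 := h3.unique (he.mul hp)
      obtain ⟨N, hN, h5⟩ := ih p (by omega) (q x) hp
      exact ⟨N + 1, by omega, h5⟩
  intro x
  by_cases h0 : x = 0
  · exact ⟨1, one_pos, by simp [h0]⟩
  · obtain ⟨m, hm⟩ := IsDeg.exists hD ((map_ne_zero_iff ι hι).2 h0)
    exact key m x hm

section Main

variable {k : Type*} [Field k] [CharZero k]
  {G : Type*} [AddCommGroup G] [DecidableEq G]
  {B : Type*} [CommRing B] [IsDomain B] [Algebra k B] [Algebra.FiniteType k B]
  (𝒜 : G → AddSubgroup B) [GradedRing 𝒜]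

/-- Nonzero kernel elements. -/
def kerMon {H : AddSubgroup G} (D : Derivation ℤ (verSub 𝒜 H) (verSub 𝒜 H)) : Submonoid B where
  carrier := {u | u ≠ 0 ∧ ∃ h : u ∈ verSub 𝒜 H, D ⟨u, h⟩ = 0}
  one_mem' := ⟨one_ne_zero, Subring.one_mem _, D.map_one_eq_zero⟩
  mul_mem' := by
    rintro a b ⟨ha0, ha, ha'⟩ ⟨hb0, hb, hb'⟩
    refine ⟨mul_ne_zero ha0 hb0, Subring.mul_mem _ ha hb, ?_⟩
    have : (⟨a * b, Subring.mul_mem _ ha hb⟩ : verSub 𝒜 H) = ⟨a, ha⟩ * ⟨b, hb⟩ := rfl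
    rw [this, Derivation.leibniz, ha', hb']
    simp

lemma uniform_exp (hoverk : ∀ c : k, algebraMap k B c ∈ 𝒜 0)
    {H' : AddSubgroup G} (hT : Tmem 𝒜 H') {A : Type*} [CommRing A] [IsDomain A]
    [CharZero A] (ι : verSub 𝒜 H' →+* A) (D : Derivation ℤ A A) (hD : IsLND D) (a z : A)
    (claim2 : ∀ x : verSub 𝒜 H', ∃ N, z ∣ a ^ N * D (ι x)) :
    ∃ N0, ∀ x : verSub 𝒜 H', z ∣ a ^ N0 * D (ι x) := by
  have mono : ∀ {N N' : ℕ} {x}, N ≤ N' → z ∣ a ^ N * D x → z ∣ a ^ N' * D x := by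
    intro N N' x hNN h
    obtain ⟨s, rfl⟩ := Nat.exists_eq_add_of_le hNN
    rw [pow_add, mul_comm (a ^ N), mul_assoc]
    exact dvd_mul_of_dvd_right h _
  obtain ⟨s, hs⟩ := verSub_fg 𝒜 hoverk hT
  choose f hf using claim2
  let T : Subring (verSub 𝒜 H') :=
    { carrier := {x | z ∣ a ^ (s.sup f) * D (ι x)}
      zero_mem' := by
        change z ∣ a ^ (s.sup f) * D (ι 0)
        simp
      one_mem' := by
        change z ∣ a ^ (s.sup f) * D (ι 1)
        simp
      add_mem' := by
        intro x x' (hx : z ∣ a ^ (s.sup f) * D (ι x))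
          (hx' : z ∣ a ^ (s.sup f) * D (ι x'))
        change z ∣ a ^ (s.sup f) * D (ι (x + x'))
        rw [map_add, map_add, mul_add]
        exact dvd_add hx hx'
      neg_mem' := by
        intro x (hx : z ∣ a ^ (s.sup f) * D (ι x))
        change z ∣ a ^ (s.sup f) * D (ι (-x))
        rw [map_neg, map_neg, mul_neg]
        exact (dvd_neg).2 hx
      mul_mem' := by
        intro x x' (hx : z ∣ a ^ (s.sup f) * D (ι x))
          (hx' : z ∣ a ^ (s.sup f) * D (ι x'))
        change z ∣ a ^ (s.sup f) * D (ι (x * x'))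
        rw [map_mul, Derivation.leibniz, smul_eq_mul, smul_eq_mul]
        have := dvd_add (dvd_mul_of_dvd_right hx' (ι x)) (dvd_mul_of_dvd_right hx (ι x'))
        convert this using 1
        ring }
  refine ⟨s.sup f, hs T ?_ ?_⟩
  · intro b
    change z ∣ a ^ (s.sup f) * D (ι (kToVer 𝒜 hoverk H' b))
    have : D (ι (kToVer 𝒜 hoverk H' b)) = 0 := by
      by_cases hb : b = 0
      · simp [hb]
      · exact lnd_unit hD (((IsUnit.mk0 b hb).map (kToVer 𝒜 hoverk H')).map ι)
    simp [this]
  · intro x hx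
    exact mono (Finset.le_sup hx) (hf x)

lemma slice_step1 {R : Type*} [CommRing R] (D : Derivation ℤ R R) {y a x w : R} {m : ℕ}
    (hya : D y = a) (hDa : D a = 0) (hDw : D w = 0) (hw : (⇑D)^[m] x = w) :
    (⇑D)^[m] ((m.factorial : R) * a ^ m * x - w * y ^ m) = 0 := by
  have h1 := iter_slice D hya hDa m w hDw
  have h2 : D ((m.factorial : R) * a ^ m) = 0 := by
    simp [Derivation.leibniz_pow, hDa]
  have h3 := iter_const_mul D m _ x h2
  rw [hw] at h3
  have h4 := iter_add D m ((m.factorial : R) * a ^ m * x - w * y ^ m) (w * y ^ m)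
  rw [sub_add_cancel, h3, h1] at h4
  linear_combination -h4

lemma slice_step2 {R : Type*} [CommRing R] (D : Derivation ℤ R R) {y a x w : R} {m n N : ℕ}
    (hya : D y = a) (hDa : D a = 0) (hDw : D w = 0) (hnm : n - 1 ≤ m - 1)
    (hu : IsUnit (m.factorial : R))
    (hN : y ^ (n - 1) ∣ a ^ N * D ((m.factorial : R) * a ^ m * x - w * y ^ m)) :
    y ^ (n - 1) ∣ a ^ (N + m) * D x := by
  rw [← hu.dvd_mul_left]
  have h1 : D ((m.factorial : R) * a ^ m * x - w * y ^ m)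
      = (m.factorial : R) * a ^ m * D x - w * (m * (y ^ (m - 1) * a)) := by
    simp [Derivation.leibniz_pow, hDa, hDw, hya]
  rw [h1] at hN
  have h2 : y ^ (n - 1) ∣ a ^ N * (w * (m * (y ^ (m - 1) * a))) := by
    refine dvd_mul_of_dvd_right (dvd_mul_of_dvd_right (dvd_mul_of_dvd_right
      (dvd_mul_of_dvd_left (pow_dvd_pow y hnm) _) _) _) _
  have h3 := dvd_add hN h2
  convert h3 using 1
  ring

lemma dvd_mono_exp {R : Type*} [CommRing R] {z a b : R} {N N' : ℕ} (h : N ≤ N')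
    (hz : z ∣ a ^ N * b) : z ∣ a ^ N' * b := by
  obtain ⟨s, rfl⟩ := Nat.exists_eq_add_of_le h
  rw [pow_add, mul_comm (a ^ N), mul_assoc]
  exact dvd_mul_of_dvd_right hz _

lemma exists_quot {R : Type*} [CommRing R] {z a b : R} (c : R) {N N' : ℕ} (h : N ≤ N')
    (hz : z ∣ a ^ N * b) : ∃ q, c * a ^ N' * b = z * q := by
  obtain ⟨q, hq⟩ := dvd_mono_exp h hz
  exact ⟨c * q, by rw [mul_assoc, hq]; ring⟩

lemma exists_incl {R : Type*} [CommRing R] {S T : Subring R} (h : S ≤ T) :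
    ∃ ι : S →+* T, Function.Injective ι ∧ ∀ x, (ι x : R) = x :=
  ⟨Subring.inclusion h, Subring.inclusion_injective h, fun _ => rfl⟩

lemma Xset_down (hoverk : ∀ c : k, algebraMap k B c ∈ 𝒜 0)
    {H H' : AddSubgroup G} (hT : Tmem 𝒜 H') (hle : H' ≤ H) (hX : H ∈ Xset 𝒜) :
    H' ∈ Xset 𝒜 := by
  classical
  obtain ⟨_, D, hD, ⟨d, hd⟩, hne⟩ := hX
  have hch : CharZero (verSub 𝒜 H) :=
    charZero_of_injective_ringHom (kToVer 𝒜 hoverk H).injective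
  obtain ⟨i0, hi0, x0, hx0, hDx0⟩ := exists_homog_ne 𝒜 hne
  have hx00 : x0 ≠ 0 := by
    rintro rfl
    simp at hDx0
  obtain ⟨m0, hm0⟩ := IsDeg.exists hD hx00
  obtain ⟨r, rfl, -⟩ := hm0.der hDx0
  -- the local slice
  obtain ⟨y, e, hye, hy0⟩ : ∃ (y : verSub 𝒜 H) (e : G), (y : B) ∈ 𝒜 e ∧ IsDeg D y 1 := by
    refine ⟨(⇑D)^[r] x0, i0 + r • d, iter_homog 𝒜 D d hd r i0 x0 hx0, ?_, ?_⟩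
    · rw [← Function.iterate_add_apply, add_comm]
      exact hm0.1
    · rw [← Function.iterate_add_apply, show 1 + 1 + r = r + 1 + 1 by ring]
      exact hm0.2
  obtain ⟨a, hya⟩ : ∃ a, D y = a := ⟨_, rfl⟩
  have ha0 : a ≠ 0 := by rw [← hya]; exact hy0.1
  have hDa : D a = 0 := by rw [← hya]; exact hy0.2
  have hae : (a : B) ∈ 𝒜 (e + d) := by rw [← hya]; exact hd e y hye
  have hyne : y ≠ 0 := by
    rintro rfl
    exact ha0 (by rw [← hya, map_zero])
  have coe_ne : ∀ {x : verSub 𝒜 H}, x ≠ 0 → (x : B) ≠ 0 := fun {x} h h' => h (Subtype.ext h')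
  have hS : (0 : B) ∉ kerMon 𝒜 D := fun h => h.1 rfl
  have hkm : ∀ {x : verSub 𝒜 H}, x ≠ 0 → D x = 0 → (x : B) ∈ kerMon 𝒜 D :=
    fun {x} h h' => ⟨coe_ne h, x.2, h'⟩
  set M : AddSubgroup G := degSub 𝒜 H' hT (kerMon 𝒜 D) hS with hM
  have haM : e + d ∈ M := deg_mem_degSub 𝒜 (hkm ha0 hDa) hae
  have heG : e ∈ Gsub 𝒜 := mem_Gsub 𝒜 hye (coe_ne hyne)
  have haG : e + d ∈ Gsub 𝒜 := mem_Gsub 𝒜 hae (coe_ne ha0)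
  have hdG : d ∈ Gsub 𝒜 := by simpa using (Gsub 𝒜).sub_mem haG heG
  obtain ⟨n, hn0, hnM, hndvd⟩ : ∃ n : ℕ, 0 < n ∧ n • d ∈ M ∧ ∀ m : ℕ, m • d ∈ M → n ∣ m := by
    have hiff : ∀ m : ℕ, m • d ∈ M ↔ m • (QuotientAddGroup.mk d : G ⧸ M) = 0 := by
      intro m
      rw [← QuotientAddGroup.mk_nsmul, QuotientAddGroup.eq_zero_iff]
    refine ⟨addOrderOf (QuotientAddGroup.mk d : G ⧸ M), ?_, ?_, ?_⟩
    · obtain ⟨t, ht, h⟩ := hT d hdG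
      exact (isOfFinAddOrder_iff_nsmul_eq_zero.2 ⟨t, ht, (hiff t).1 (le_degSub 𝒜 h)⟩).addOrderOf_pos
    · rw [hiff]
      exact addOrderOf_nsmul_eq_zero _
    · intro m hm
      exact addOrderOf_dvd_of_nsmul_eq_zero ((hiff m).1 hm)
  obtain ⟨c0, ⟨hc0, hcA, hDc⟩, j, hcj, hjH⟩ := (mem_degSub 𝒜).1 (M.neg_mem hnM)
  obtain ⟨c, hc⟩ : ∃ c : verSub 𝒜 H, c = ⟨c0, hcA⟩ := ⟨_, rfl⟩
  rw [← hc] at hDc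
  have hcj' : (c : B) ∈ 𝒜 j := by rw [hc]; exact hcj
  have hcne : c ≠ 0 := by
    intro h
    rw [h] at hc
    exact hc0 (congrArg Subtype.val hc).symm
  -- main divisibility claim
  have claim : ∀ m : ℕ, ∀ (x : verSub 𝒜 H) (i : G), (x : B) ∈ 𝒜 i → i ∈ M → (⇑D)^[m] x = 0 →
      ∃ N, y ^ (n - 1) ∣ a ^ N * D x := by
    intro m
    induction m with
    | zero =>
      intro x i _ _ hx
      have : x = 0 := hx
      exact ⟨0, by simp [this]⟩
    | succ m ih =>
      intro x i hxi hiM hx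
      by_cases hm : (⇑D)^[m] x = 0
      · exact ih x i hxi hiM hm
      obtain ⟨w, hw⟩ : ∃ w, (⇑D)^[m] x = w := ⟨_, rfl⟩
      have hw0 : w ≠ 0 := by rw [← hw]; exact hm
      have hDw : D w = 0 := by rw [← hw, ← Function.iterate_succ_apply' D]; exact hx
      have hwd : (w : B) ∈ 𝒜 (i + m • d) := by rw [← hw]; exact iter_homog 𝒜 D d hd m i x hxi
      have hmd : m • d ∈ M := by
        have := M.sub_mem (deg_mem_degSub 𝒜 (hkm hw0 hDw) hwd) hiM
        simpa using this
      have hnm := hndvd m hmd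
      rcases Nat.eq_zero_or_pos m with rfl | hmpos
      · exact ⟨0, by simp [show D x = 0 from hx]⟩
      have hnm' : n ≤ m := Nat.le_of_dvd hmpos hnm
      obtain ⟨N, hN⟩ := ih ((m.factorial : verSub 𝒜 H) * a ^ m * x - w * y ^ m)
        (i + m • (e + d)) (by
          push_cast
          refine sub_mem ?_ ?_
          · rw [mul_assoc, ← nsmul_eq_mul]
            refine nsmul_mem ?_ _
            rw [add_comm i]
            exact SetLike.mul_mem_graded (SetLike.pow_mem_graded m hae) hxi
          · have := SetLike.mul_mem_graded hwd (SetLike.pow_mem_graded m hye)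
            convert this using 2
            rw [nsmul_add]
            abel)
        (M.add_mem hiM (M.nsmul_mem haM m)) (slice_step1 D hya hDa hDw hw)
      refine ⟨N + m, ?_⟩
      have hu : IsUnit (m.factorial : verSub 𝒜 H) := by
        have h1 : IsUnit (m.factorial : k) :=
          IsUnit.mk0 _ (by exact_mod_cast m.factorial_ne_zero)
        rw [← map_natCast (kToVer 𝒜 hoverk H)]
        exact h1.map (kToVer 𝒜 hoverk H)
      exact slice_step2 D hya hDa hDw (by omega) hu hN
  obtain ⟨ι, hιinj, hι⟩ := exists_incl (verSub_mono 𝒜 hle)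
  have claim2 : ∀ x : verSub 𝒜 H', ∃ N, y ^ (n - 1) ∣ a ^ N * D (ι x) := by
    intro x
    refine verSub_induction 𝒜 (p := fun x => ∃ N, y ^ (n - 1) ∣ a ^ N * D (ι x)) ?_ ?_ x
    · intro i hi x hx
      obtain ⟨m, _, hm⟩ := hD (ι x)
      exact claim m (ι x) i (by rw [hι]; exact hx) (le_degSub 𝒜 hi) hm
    · rintro x x' ⟨N, hN⟩ ⟨N', hN'⟩
      refine ⟨max N N', ?_⟩
      rw [map_add, map_add, mul_add]
      exact dvd_add (dvd_mono_exp (le_max_left _ _) hN) (dvd_mono_exp (le_max_right _ _) hN')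
  obtain ⟨N0, hN0⟩ : ∃ N0, ∀ x : verSub 𝒜 H', y ^ (n - 1) ∣ a ^ N0 * D (ι x) :=
    uniform_exp 𝒜 hoverk hT ι D hD a (y ^ (n - 1)) claim2
  obtain ⟨t, ht0, ht⟩ := hT _ haG
  obtain ⟨N, hN⟩ : ∃ N, N = (n - 1) + t * N0 := ⟨_, rfl⟩
  have hNN : N0 ≤ N := by nlinarith
  have hq : ∀ x : verSub 𝒜 H', ∃ q : verSub 𝒜 H, c * a ^ N * D (ι x) = y ^ (n - 1) * q := by
    intro x
    exact exists_quot c hNN (hN0 x)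
  choose q hq using hq
  have hz : y ^ (n - 1) ≠ 0 := pow_ne_zero _ hyne
  obtain ⟨δ, hδ⟩ : ∃ δ, δ = j + n • d + N0 • (t • (e + d)) := ⟨_, rfl⟩
  have hδH : δ ∈ H' := by
    rw [hδ]
    refine H'.add_mem ?_ (H'.nsmul_mem ht _)
    have := H'.neg_mem hjH
    convert this using 1
    abel
  have hqd : ∀ (i : G) (x : verSub 𝒜 H'), (x : B) ∈ 𝒜 i → (q x : B) ∈ 𝒜 (i + δ) := by
    intro i x hx
    have h1 : (c * a ^ N * D (ι x) : B) ∈ 𝒜 (j + N • (e + d) + (i + d)) :=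
      SetLike.mul_mem_graded (SetLike.mul_mem_graded hcj' (SetLike.pow_mem_graded N hae))
        (hd i _ (by rw [hι]; exact hx))
    have h2 := congrArg Subtype.val (hq x)
    simp only [Subring.coe_mul, Subring.coe_pow] at h2
    rw [h2] at h1
    have h3 := mem_of_mul_mem 𝒜 (SetLike.pow_mem_graded (n - 1) hye)
      (pow_ne_zero _ (coe_ne hyne)) h1
    convert h3 using 2
    rw [hδ, hN]
    obtain ⟨n', rfl⟩ : ∃ n', n = n' + 1 := ⟨n - 1, by omega⟩
    simp only [add_tsub_cancel_right, add_nsmul, nsmul_add, mul_comm t, mul_nsmul', one_nsmul]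
    abel
  have hqA : ∀ x, (q x : B) ∈ verSub 𝒜 H' := by
    intro x
    refine verSub_induction 𝒜 (p := fun x => (q x : B) ∈ verSub 𝒜 H') ?_ ?_ x
    · intro i hi x hx
      exact mem_verSub 𝒜 (H'.add_mem hi hδH) (hqd i x hx)
    · intro x x' hx hx'
      have : q (x + x') = q x + q x' := by
        apply mul_left_cancel₀ hz
        rw [← hq, map_add, map_add, mul_add, mul_add, hq, hq]
      rw [this]
      exact Subring.add_mem _ hx hx'
  have hw : c * a ^ N ≠ 0 := mul_ne_zero hcne (pow_ne_zero _ ha0)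
  obtain ⟨D', hD', hD'q⟩ := exists_div_der ι hιinj D hD (c * a ^ N) (y ^ (n - 1)) hz hw
    (by simp [Derivation.leibniz_pow, hDa, hDc]) (fun x => ⟨q x, hqA x⟩) (fun x => by
      rw [hq]
      congr 1
      apply Subtype.ext
      rw [hι])
  refine ⟨hT, D', hD', ⟨δ, fun i x hx => ?_⟩, ?_⟩
  · rw [hD'q]
    exact hqd i x hx
  · rintro rfl
    obtain ⟨s, hs0, -, hs⟩ := exists_pow_mem 𝒜 hT hye (coe_ne hyne)
    have h1 : q ⟨_, hs⟩ = 0 := by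
      have := congrArg Subtype.val (hD'q ⟨_, hs⟩)
      exact Subtype.ext this.symm
    have h2 := hq ⟨_, hs⟩
    have h3 : ι ⟨_, hs⟩ = y ^ s := by
      apply Subtype.ext
      rw [hι, Subring.coe_pow]
    rw [h1, h3, Derivation.leibniz_pow, hya, mul_zero, nsmul_eq_mul, smul_eq_mul] at h2
    refine mul_ne_zero hw (mul_ne_zero ?_ (mul_ne_zero (pow_ne_zero _ hyne) ha0)) h2
    exact_mod_cast hs0.ne'

lemma Xset_up (hoverk : ∀ c : k, algebraMap k B c ∈ 𝒜 0)
    (L : Type*) [Field L] [Algebra B L] [IsFractionRing B L]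
    [IsIntegrallyClosed B] {H : AddSubgroup G} (hX : H ∈ Xset 𝒜) :
    H ⊔ Gbar 𝒜 ∈ Xset 𝒜 := by
  obtain ⟨hT, D, hD, ⟨d, hd⟩, hne⟩ := hX
  have hnoeth : IsNoetherianRing B := Algebra.FiniteType.isNoetherianRing k B
  have hch : CharZero (verSub 𝒜 H) :=
    charZero_of_injective_ringHom (kToVer 𝒜 hoverk H).injective
  have hch' : CharZero (verSub 𝒜 (H ⊔ Gbar 𝒜)) :=
    charZero_of_injective_ringHom (kToVer 𝒜 hoverk (H ⊔ Gbar 𝒜)).injective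
  have hchB : CharZero B := charZero_of_injective_ringHom (algebraMap k B).injective
  have inj : Function.Injective (algebraMap B L) := IsFractionRing.injective B L
  have : Algebra.IsIntegral (verSub 𝒜 H) B := verSub_integral 𝒜 hT
  have : Algebra.IsAlgebraic B L := IsLocalization.isAlgebraic L (nonZeroDivisors B)
  have : Algebra.IsAlgebraic (verSub 𝒜 H) L := Algebra.IsAlgebraic.trans (verSub 𝒜 H) B L
  have : FaithfulSMul (verSub 𝒜 H) L :=
    (faithfulSMul_iff_algebraMap_injective _ _).2 (inj.comp Subtype.coe_injective)
  obtain ⟨E, hE⟩ := aux_ext_der (L := L) D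
  have hE' : ∀ (x : B) (hx : x ∈ verSub 𝒜 H),
      E (algebraMap B L x) = algebraMap B L (D ⟨x, hx⟩ : verSub 𝒜 H) := fun x hx => hE ⟨x, hx⟩
  obtain ⟨i0, hi0, x0, hx0, hDx0⟩ := exists_homog_ne 𝒜 hne
  have hdH : d ∈ H := by
    have h1 := deg_mem_of_mem_verSub 𝒜 (D x0).2 (fun h => hDx0 (Subtype.ext h)) (hd i0 x0 hx0)
    simpa using H.sub_mem h1 hi0
  have hom : ∀ i ∈ H ⊔ Gbar 𝒜, ∀ c ∈ 𝒜 i, ∃ b ∈ 𝒜 (i + d), algebraMap B L b = E (algebraMap B L c) := by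
    intro i hi c hc
    by_cases hc0 : c = 0
    · exact ⟨0, AddSubgroup.zero_mem _, by simp [hc0]⟩
    obtain ⟨b, hb⟩ : ∃ b, algebraMap B L b = E (algebraMap B L c) := by
      apply hartogs
      intro P hP
      have hPp : P.IsPrime := hP.1
      have h0 : (0 : B) ∉ P.primeCompl := fun h => h P.zero_mem
      have hGb : Gbar 𝒜 ≤ Mbar 𝒜 P := by
        rw [Gbar, if_pos ⟨P, hP⟩]
        exact iInf_le (fun p : {p : Ideal B // heightOne p} => Mbar 𝒜 p.1) ⟨P, hP⟩
      have hMb : Mbar 𝒜 P ≤ degSub 𝒜 H hT P.primeCompl h0 := by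
        refine (AddSubgroup.closure_le _).2 ?_
        intro l hl
        obtain ⟨u, hu, huP⟩ := Set.not_subset.1 hl
        exact deg_mem_degSub 𝒜 (S := P.primeCompl) huP hu
      have hiM : i ∈ degSub 𝒜 H hT P.primeCompl h0 :=
        (sup_le (le_degSub 𝒜) (hGb.trans hMb)) hi
      obtain ⟨u, hu, j, hj, hij⟩ := (mem_degSub 𝒜).1 (AddSubgroup.neg_mem _ hiM)
      have hu0 : u ≠ 0 := fun h => h0 (h ▸ hu)
      have hijH : j + i ∈ H := by
        have := H.neg_mem hij
        convert this using 1
        abel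
      have huc : u * c ∈ verSub 𝒜 H := mem_verSub 𝒜 hijH (SetLike.mul_mem_graded hj hc)
      obtain ⟨t, ht, -, htA⟩ := exists_pow_mem 𝒜 hT hj hu0
      refine ⟨u ^ t, P.primeCompl.pow_mem hu t,
        u ^ (t - 1) * (D ⟨_, huc⟩ : verSub 𝒜 H) -
          algebraMap k B (t : k)⁻¹ * c * (D ⟨_, htA⟩ : verSub 𝒜 H), ?_⟩
      have h1 := hE' _ huc
      have h2 := hE' _ htA
      rw [map_mul, Derivation.leibniz, smul_eq_mul, smul_eq_mul] at h1
      rw [map_pow, Derivation.leibniz_pow, nsmul_eq_mul, smul_eq_mul] at h2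
      have h3 : algebraMap B L (algebraMap k B (t : k)⁻¹) * (t : L) = 1 := by
        have : (t : L) = algebraMap B L (algebraMap k B (t : k)) := by simp
        rw [this, ← map_mul, ← map_mul, inv_mul_cancel₀ (by exact_mod_cast ht.ne'), map_one,
          map_one]
      obtain ⟨s, rfl⟩ : ∃ s, t = s + 1 := ⟨t - 1, by omega⟩
      simp only [add_tsub_cancel_right] at h2 ⊢
      rw [map_sub, map_mul, map_mul, map_mul, ← h1, ← h2, map_pow, map_pow]
      linear_combination (algebraMap B L c * algebraMap B L u ^ s * E (algebraMap B L u)) * h3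
    refine ⟨b, ?_, hb⟩
    obtain ⟨t, ht, -, htA⟩ := exists_pow_mem 𝒜 hT hc hc0
    have h2 := hE' _ htA
    rw [map_pow, Derivation.leibniz_pow, nsmul_eq_mul, smul_eq_mul, ← hb, ← map_pow, ← map_mul,
      ← map_natCast (algebraMap B L), ← map_mul, ← mul_assoc] at h2
    have h3 := hd (t • i) ⟨_, htA⟩ (SetLike.pow_mem_graded t hc)
    rw [← inj h2] at h3
    have h4 : (t : B) * c ^ (t - 1) ∈ 𝒜 ((t - 1) • i) := by
      rw [← nsmul_eq_mul]
      exact nsmul_mem (SetLike.pow_mem_graded _ hc) _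
    have h5 := mem_of_mul_mem 𝒜 h4
      (mul_ne_zero (by exact_mod_cast ht.ne') (pow_ne_zero _ hc0)) h3
    convert h5 using 2
    obtain ⟨s, rfl⟩ : ∃ s, t = s + 1 := ⟨t - 1, by omega⟩
    simp only [add_tsub_cancel_right, succ_nsmul]
    abel
  have hex : ∀ x : verSub 𝒜 (H ⊔ Gbar 𝒜), ∃ b : verSub 𝒜 (H ⊔ Gbar 𝒜),
      algebraMap B L b = E (algebraMap B L x) := by
    intro x
    refine verSub_induction 𝒜 (p := fun x => ∃ b : verSub 𝒜 (H ⊔ Gbar 𝒜),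
      algebraMap B L b = E (algebraMap B L x)) ?_ ?_ x
    · intro i hi x hx
      obtain ⟨b, hb, hbE⟩ := hom i hi x hx
      exact ⟨⟨b, mem_verSub 𝒜 (AddSubgroup.add_mem _ hi (AddSubgroup.mem_sup_left hdH)) hb⟩, hbE⟩
    · rintro x x' ⟨b, hb⟩ ⟨b', hb'⟩
      exact ⟨b + b', by simp [hb, hb']⟩
  choose q hq using hex
  have inj' : ∀ {x x' : verSub 𝒜 (H ⊔ Gbar 𝒜)},
      algebraMap B L x = algebraMap B L x' → x = x' := fun h => Subtype.ext (inj h)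
  have hadd : ∀ x x', q (x + x') = q x + q x' := by
    intro x x'
    apply inj'
    simp [hq]
  have hmul : ∀ x x', q (x * x') = x * q x' + x' * q x := by
    intro x x'
    apply inj'
    simp [hq]
  obtain ⟨D', hD'⟩ : ∃ D' : Derivation ℤ (verSub 𝒜 (H ⊔ Gbar 𝒜)) (verSub 𝒜 (H ⊔ Gbar 𝒜)),
      ∀ x, D' x = q x :=
    ⟨Derivation.mk' (AddMonoidHom.mk' q hadd).toIntLinearMap (fun x y => by simpa using hmul x y),
      fun x => rfl⟩
  have hD'hom : ∀ (i : G) (x : verSub 𝒜 (H ⊔ Gbar 𝒜)), (x : B) ∈ 𝒜 i →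
      ((D' x : verSub 𝒜 (H ⊔ Gbar 𝒜)) : B) ∈ 𝒜 (i + d) := by
    intro i x hx
    by_cases hx0 : x = 0
    · rw [hx0, map_zero]
      exact AddSubgroup.zero_mem _
    have hi := deg_mem_of_mem_verSub 𝒜 x.2 (fun h => hx0 (Subtype.ext h)) hx
    obtain ⟨b, hb, hbE⟩ := hom i hi x hx
    rw [hD']
    rw [← hq] at hbE
    rw [← inj hbE]
    exact hb
  let φ : verSub 𝒜 H →+* verSub 𝒜 (H ⊔ Gbar 𝒜) := Subring.inclusion (verSub_mono 𝒜 le_sup_left)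
  have hφinj : Function.Injective φ := Subring.inclusion_injective _
  have hφD : ∀ a, D' (φ a) = φ (D a) := by
    intro a
    apply inj'
    rw [hD', hq]
    exact hE a
  refine ⟨fun g hg => ?_, D', ?_, ⟨d, hD'hom⟩, ?_⟩
  · obtain ⟨n, hn, h⟩ := hT g hg
    exact ⟨n, hn, AddSubgroup.mem_sup_left h⟩
  · intro x
    refine verSub_induction 𝒜 (p := fun x => ∃ n : ℕ, 0 < n ∧ (⇑D')^[n] x = 0) ?_ ?_ x
    · intro i hi x hx
      by_cases hx0 : x = 0
      · exact ⟨1, one_pos, by simp [hx0]⟩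
      have hx0' : (x : B) ≠ 0 := fun h => hx0 (Subtype.ext h)
      obtain ⟨t, ht, htH, htA⟩ := exists_pow_mem 𝒜 hT hx hx0'
      have hF0 : (⟨_, htA⟩ : verSub 𝒜 H) ≠ 0 := by
        intro h
        exact pow_ne_zero t hx0' (congrArg Subtype.val h)
      obtain ⟨m, hm⟩ := IsDeg.exists hD hF0
      refine nilp_of_pow φ hφinj D hD D' hφD t ht m x ⟨_, htA⟩ ?_ rfl hm
      intro j
      have h1 := SetLike.pow_mem_graded t (iter_homog 𝒜 D' d hD'hom j i x hx)
      have h2 : t • (i + j • d) ∈ H := by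
        rw [nsmul_add]
        exact H.add_mem htH (H.nsmul_mem (H.nsmul_mem hdH _) _)
      exact ⟨⟨_, mem_verSub 𝒜 h2 h1⟩, rfl⟩
    · rintro x x' ⟨n, hn, h⟩ ⟨n', hn', h'⟩
      refine ⟨n + n', by omega, ?_⟩
      rw [iter_add, iter_ge D' (by omega) h, iter_ge D' (by omega) h', add_zero]
  · rintro rfl
    have := hφD x0
    apply hDx0
    apply hφinj
    rw [← this, map_zero]
    rfl

end Main

/-- Let k be a field of characteristic 0 and B an affine k-domain graded over k by a
finitely generated abelian group G. Then:
(a) 𝒳(B) = ⋃_{H ∈ ℳ(B)} 𝕋_H(B), where 𝕋_H(B) = { H' ∈ 𝕋(B) : H' ⊆ H };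
(b) if B is normal, then every H ∈ ℳ(B) satisfies 𝔾̄(B) ⊆ H. -/
theorem Xset_eq_union_and_Mset_above_Gbar
    {k : Type*} [Field k] [CharZero k]
    {G : Type*} [AddCommGroup G] [DecidableEq G] [AddGroup.FG G]
    {B : Type*} [CommRing B] [IsDomain B] [Algebra k B] [Algebra.FiniteType k B]
    (𝒜 : G → AddSubgroup B) [GradedRing 𝒜]
    (hoverk : ∀ c : k, algebraMap k B c ∈ 𝒜 0) :
    (Xset 𝒜 = ⋃ H ∈ Mset 𝒜, { H' : AddSubgroup G | Tmem 𝒜 H' ∧ H' ≤ H }) ∧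
    (IsIntegrallyClosed B → ∀ H ∈ Mset 𝒜, Gbar 𝒜 ≤ H) := by
  constructor
  · apply Set.Subset.antisymm
    · intro H hH
      have hfin : Module.Finite ℤ G := Module.Finite.iff_addGroup_fg.2 inferInstance
      have hwf : WellFounded ((· > ·) : AddSubgroup G → AddSubgroup G → Prop) := by
        have h1 : WellFoundedGT (Submodule ℤ G) := inferInstance
        exact (AddSubgroup.toIntSubmodule (M := G)).toOrderEmbedding.dual.ltEmbedding.wellFounded
          h1.wf
      obtain ⟨M, ⟨hM, hHM⟩, hmax⟩ := hwf.has_min {M | M ∈ Xset 𝒜 ∧ H ≤ M} ⟨H, hH, le_rfl⟩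
      refine Set.mem_biUnion (x := M) ⟨hM, fun M' hM' hle => ?_⟩ ⟨hH.1, hHM⟩
      by_contra hne
      exact hmax M' ⟨hM', hHM.trans hle⟩ (lt_of_le_of_ne hle (Ne.symm hne))
    · intro H hH
      simp only [Set.mem_iUnion] at hH
      obtain ⟨M, hM, hT, hle⟩ := hH
      exact Xset_down 𝒜 hoverk hT hle hM.1
  · intro hnorm H hH
    have h1 := hH.2 _ (Xset_up 𝒜 hoverk (FractionRing B) hH.1) le_sup_left
    rw [← h1]
    exact le_sup_right
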